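/- For all odd natural numbers k, l and every odd j ≥ 1, the derivations commute on the generators of the first family: D_k(D_l(b_{1,j})) = D_l(D_k(b_{1,j})). -/

import Mathlib

open MvPolynomial Finset

noncomputable section

/-- The polynomial ring `R = ℂ[b_{i,2j-1} : i ∈ {1,2,3}, j ≥ 1]`. -/
abbrev R : Type := MvPolynomial (Fin 3 × ℕ+) ℂ

/-- `b i j` denotes the variable `b_{i+1, j}`, intended for odd `j ≥ 1`;
the variable `b_{i+1, 2m-1}` is `X (i, m)`. -/
def b (i : Fin 3) (j : ℕ) : R := MvPolynomial.X (i, ⟨j / 2 + 1, Nat.succ_pos _⟩)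

/-- The derivation `D_1`, determined by its values on the variables. -/
def D1 : Derivation ℂ R R :=
  MvPolynomial.mkDerivation ℂ fun p =>
    let j : ℕ := 2 * (p.2 : ℕ) - 1
    if p.1 = 0 then b 1 j
    else if p.1 = 1 then b 2 j
    else 4 * (2 * b 0 1 * b 1 j + b 1 1 * b 0 j + b 1 (j + 2))

/-- The value of `D_k` on the variable `b_{1,j}` (for odd `k`, `j`). -/
def DB1 (k j : ℕ) : R :=
  b 1 (j + k - 1) + ∑ s ∈ Finset.Icc 1 ((k - 1) / 2),
    (b 1 (2 * s - 1) * b 0 (j + k - 2 * s - 1) - b 0 (2 * s - 1) * b 1 (j + k - 2 * s - 1))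

/-- The derivation `D_k` (intended for odd `k`), determined by
`D_k(b_{1,j}) = DB1 k j`, `D_k(b_{2,j}) = D_1(D_k(b_{1,j}))`, `D_k(b_{3,j}) = D_1(D_k(b_{2,j}))`. -/
def D (k : ℕ) : Derivation ℂ R R :=
  MvPolynomial.mkDerivation ℂ fun p =>
    let j : ℕ := 2 * (p.2 : ℕ) - 1
    if p.1 = 0 then DB1 k j
    else if p.1 = 1 then D1 (DB1 k j)
    else D1 (D1 (DB1 k j))

end

/-!
With `∂ = D_1`, `δ_p = D_{2p+1}`, `x_n = b_{1,2n+1}` and `W(f, g) = f ∂g - ∂f g`, the definition of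
`D_k` on the first family becomes the recurrence `δ_{p+1} x_n = δ_p x_{n+1} + W(x_n, x_p)`, and its
values on the second family say that `δ_p` commutes with `∂` on every `x_n`. These two facts alone
force the derivations to commute on the `x_n`. As `W` is alternating, `δ_p x_q - δ_q x_p` depends
only on `p + q`, and it vanishes for `q = p` and for `q = p + 1`; hence `δ_p x_q = δ_q x_p`.
Write `C(p, q, n) = [δ_p, δ_q] x_n`. The recurrence gives
`C(p+1, q+1, n) = C(p, q+1, n+1) + C(p+1, q, n+1) - C(p, q, n+2)`: the Wronskian terms left over
cancel by the Jacobi identity for `W`, so induction reduces to `p = 0` or `q = 0`.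
-/

section Wronskian

variable {𝕜 A : Type*} [CommSemiring 𝕜] [CommRing A] [Algebra 𝕜 A]

/-- The Wronskian of `f` and `g` with respect to a derivation `d`, with the sign convention of
`Polynomial.wronskian`. -/
def wronskian (d : Derivation 𝕜 A A) (f g : A) : A :=
  f * d g - d f * g

variable (d : Derivation 𝕜 A A)

lemma wronskian_self (f : A) : wronskian d f f = 0 := by
  rw [wronskian]
  ring

lemma wronskian_swap (f g : A) : wronskian d g f = -wronskian d f g := by
  rw [wronskian, wronskian]
  ring

lemma wronskian_add_left (f g h : A) :
    wronskian d (f + g) h = wronskian d f h + wronskian d g h := by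
  simp only [wronskian, map_add]
  ring

lemma wronskian_add_right (f g h : A) :
    wronskian d f (g + h) = wronskian d f g + wronskian d f h := by
  simp only [wronskian, map_add]
  ring

lemma leibniz_wronskian (f g h : A) :
    wronskian d f (wronskian d g h) =
      wronskian d (wronskian d f g) h + wronskian d g (wronskian d f h) := by
  simp only [wronskian, map_sub, Derivation.leibniz, smul_eq_mul]
  ring

lemma map_wronskian_of_commute {d δ : Derivation 𝕜 A A} {f g : A}
    (hf : δ (d f) = d (δ f)) (hg : δ (d g) = d (δ g)) :
    δ (wronskian d f g) = wronskian d (δ f) g + wronskian d f (δ g) := by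
  simp only [wronskian, map_sub, Derivation.leibniz, smul_eq_mul, hf, hg]
  ring

end Wronskian

section Hierarchy

variable {𝕜 A : Type*} [CommRing 𝕜] [CommRing A] [Algebra 𝕜 A]

/-- A sequence of derivations `δ` acting on a sequence `x` as the flows of a KdV-type hierarchy:
`δ 0` is differentiation in the space variable, and each further flow arises from the previous one
by a shift of `x` and a Wronskian correction. -/
structure IsWronskianHierarchy (δ : ℕ → Derivation 𝕜 A A) (x : ℕ → A) : Prop where
  map_succ (p n : ℕ) : δ (p + 1) (x n) = δ p (x (n + 1)) + wronskian (δ 0) (x n) (x p)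
  map_map_zero (p n : ℕ) : δ p (δ 0 (x n)) = δ 0 (δ p (x n))

namespace IsWronskianHierarchy

variable {δ : ℕ → Derivation 𝕜 A A} {x : ℕ → A}

lemma map_symm_add (h : IsWronskianHierarchy δ x) (p d : ℕ) :
    δ p (x (p + d)) = δ (p + d) (x p) := by
  induction d using Nat.twoStepInduction generalizing p with
  | zero => rfl
  | one => rw [h.map_succ, wronskian_self, add_zero]
  | more d ih _ =>
    have inner : δ (p + 1) (x (p + 1 + d)) = δ (p + 1 + d) (x (p + 1)) := ih (p + 1)
    have left := h.map_succ p (p + 1 + d)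
    have right := h.map_succ (p + 1 + d) p
    have skew := wronskian_swap (δ 0) (x p) (x (p + 1 + d))
    rw [show p + (d + 2) = p + 1 + d + 1 by ring]
    linear_combination inner - left - right - skew

lemma map_symm (h : IsWronskianHierarchy δ x) (p q : ℕ) : δ p (x q) = δ q (x p) := by
  rcases le_total p q with hpq | hqp
  · obtain ⟨d, rfl⟩ := Nat.exists_eq_add_of_le hpq
    exact h.map_symm_add p d
  · obtain ⟨d, rfl⟩ := Nat.exists_eq_add_of_le hqp
    exact (h.map_symm_add q d).symm

lemma map_wronskian (h : IsWronskianHierarchy δ x) (p m n : ℕ) :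
    δ p (wronskian (δ 0) (x m) (x n)) =
      wronskian (δ 0) (δ p (x m)) (x n) + wronskian (δ 0) (x m) (δ p (x n)) :=
  map_wronskian_of_commute (h.map_map_zero p m) (h.map_map_zero p n)

lemma map_succ_wronskian_sub (h : IsWronskianHierarchy δ x) (p q n : ℕ) :
    δ (p + 1) (wronskian (δ 0) (x n) (x q)) - δ p (wronskian (δ 0) (x (n + 1)) (x q)) =
      wronskian (δ 0) (wronskian (δ 0) (x n) (x p)) (x q)
        + wronskian (δ 0) (x n) (δ (p + 1) (x q)) - wronskian (δ 0) (x (n + 1)) (δ p (x q)) := by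
  rw [h.map_wronskian, h.map_wronskian, h.map_succ p n, wronskian_add_left]
  ring

lemma map_succ_wronskian_sub_symm (h : IsWronskianHierarchy δ x) (p q n : ℕ) :
    δ (p + 1) (wronskian (δ 0) (x n) (x q)) - δ p (wronskian (δ 0) (x (n + 1)) (x q)) =
      δ (q + 1) (wronskian (δ 0) (x n) (x p)) - δ q (wronskian (δ 0) (x (n + 1)) (x p)) := by
  have shift : δ (p + 1) (x q) = δ (q + 1) (x p) + wronskian (δ 0) (x q) (x p) := by
    rw [h.map_succ p q, h.map_symm p (q + 1)]
  have jacobi := leibniz_wronskian (δ 0) (x n) (x q) (x p)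
  have skew := wronskian_swap (δ 0) (x q) (wronskian (δ 0) (x n) (x p))
  rw [h.map_succ_wronskian_sub, h.map_succ_wronskian_sub, h.map_symm p q, shift,
    wronskian_add_right]
  linear_combination jacobi + skew

lemma lie_succ_succ_apply (h : IsWronskianHierarchy δ x) (p q n : ℕ) :
    ⁅δ (p + 1), δ (q + 1)⁆ (x n) =
      ⁅δ p, δ (q + 1)⁆ (x (n + 1)) + ⁅δ (p + 1), δ q⁆ (x (n + 1)) - ⁅δ p, δ q⁆ (x (n + 2)) := by
  simp only [Derivation.commutator_apply, h.map_succ, map_add]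
  linear_combination h.map_succ_wronskian_sub_symm p q n

theorem lie_apply_eq_zero (h : IsWronskianHierarchy δ x) (p q n : ℕ) : ⁅δ p, δ q⁆ (x n) = 0 := by
  induction p generalizing q n with
  | zero => rw [Derivation.commutator_apply, h.map_map_zero, sub_self]
  | succ p ihp =>
    induction q generalizing n with
    | zero => rw [Derivation.commutator_apply, h.map_map_zero, sub_self]
    | succ q ihq => rw [h.lie_succ_succ_apply, ihp, ihq, ihp, add_zero, sub_zero]

end IsWronskianHierarchy

end Hierarchy

lemma b_two_mul_add_one (i : Fin 3) (n : ℕ) : b i (2 * n + 1) = X (i, n.succPNat) := by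
  have half : (2 * n + 1) / 2 = n := by omega
  simp only [b, half]
  rfl

lemma derivation_ext_b {d d' : Derivation ℂ R R} (h : ∀ i j, Odd j → d (b i j) = d' (b i j)) :
    d = d' := by
  refine MvPolynomial.derivation_ext fun ⟨i, m⟩ => ?_
  rw [← PNat.succPNat_natPred m, ← b_two_mul_add_one]
  exact h i _ (odd_two_mul_add_one _)

lemma D1_b_zero {j : ℕ} (hj : Odd j) : D1 (b 0 j) = b 1 j := by
  obtain ⟨n, rfl⟩ := hj
  rw [D1, b_two_mul_add_one 0 n, mkDerivation_X]
  rfl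

lemma D1_b_one {j : ℕ} (hj : Odd j) : D1 (b 1 j) = b 2 j := by
  obtain ⟨n, rfl⟩ := hj
  rw [D1, b_two_mul_add_one 1 n, mkDerivation_X]
  rfl

lemma D_b (k : ℕ) (i : Fin 3) {j : ℕ} (hj : Odd j) : D k (b i j) = D1^[i] (DB1 k j) := by
  obtain ⟨n, rfl⟩ := hj
  rw [D, b_two_mul_add_one, mkDerivation_X]
  fin_cases i <;> rfl

lemma D_b_zero (k : ℕ) {j : ℕ} (hj : Odd j) : D k (b 0 j) = DB1 k j :=
  D_b k 0 hj

lemma D_b_one (k : ℕ) {j : ℕ} (hj : Odd j) : D k (b 1 j) = D1 (DB1 k j) :=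
  D_b k 1 hj

lemma D_one_eq_D1 : D 1 = D1 := by
  refine derivation_ext_b fun i j hj => ?_
  have DB1_one : DB1 1 j = b 1 j := by simp [DB1]
  rw [D_b 1 i hj, DB1_one]
  fin_cases i
  · exact (D1_b_zero hj).symm
  · rfl
  · exact congrArg D1 (D1_b_one hj)

lemma DB1_succ (p n : ℕ) :
    DB1 (2 * (p + 1) + 1) (2 * n + 1) =
      DB1 (2 * p + 1) (2 * (n + 1) + 1)
        + wronskian D1 (b 0 (2 * n + 1)) (b 0 (2 * p + 1)) := by
  have upper_succ : (2 * (p + 1) + 1 - 1) / 2 = p + 1 := by omega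
  have upper : (2 * p + 1 - 1) / 2 = p := by omega
  have shift : 2 * n + 1 + (2 * (p + 1) + 1) = 2 * (n + 1) + 1 + (2 * p + 1) := by ring
  have top_left : 2 * (p + 1) - 1 = 2 * p + 1 := by omega
  have top_right : 2 * (n + 1) + 1 + (2 * p + 1) - 2 * (p + 1) - 1 = 2 * n + 1 := by omega
  rw [DB1, DB1, upper_succ, upper, sum_Icc_succ_top (by omega), shift, top_left, top_right,
    wronskian, D1_b_zero (odd_two_mul_add_one n), D1_b_zero (odd_two_mul_add_one p)]
  ring

theorem isWronskianHierarchy_D :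
    IsWronskianHierarchy (fun p => D (2 * p + 1)) (fun n => b 0 (2 * n + 1)) where
  map_succ p n := by
    simpa only [D_b_zero _ (odd_two_mul_add_one _), mul_zero, zero_add, D_one_eq_D1]
      using DB1_succ p n
  map_map_zero p n := by
    have hn := odd_two_mul_add_one n
    simp only [mul_zero, zero_add, D_one_eq_D1, D1_b_zero hn, D_b_zero _ hn, D_b_one _ hn]

/-- `D_k` and `D_l` commute on the generators `b_{1,j}` for odd `k`, `l`, `j`. -/
theorem commute_on_b1 (k l j : ℕ) (hk : Odd k) (hl : Odd l) (hj : Odd j) :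
    D k (D l (b 0 j)) = D l (D k (b 0 j)) := by
  obtain ⟨p, rfl⟩ := hk
  obtain ⟨q, rfl⟩ := hl
  obtain ⟨n, rfl⟩ := hj
  exact sub_eq_zero.mp (isWronskianHierarchy_D.lie_apply_eq_zero p q n)
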